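/- Let G be an interval graph with interval representation I and right-endpoint ordering σ, and let P=(P_1,u,u′,P_2) be a normal path of G in which u′ is the immediate successor of u. Then every vertex v ∈ V(P_2) satisfies u <_σ v or u′ <_σ v. -/

import Mathlib

/-- `p` is a normal path of the interval graph `G` with right-endpoint function `r`:
it is a path (consecutive vertices adjacent, no repeated vertex), its first vertex is
the leftmost vertex of the path in the right-endpoint ordering, and each vertex `p[i+1]`
is the leftmost (in the right-endpoint ordering) vertex among the later path vertices
that are adjacent to `p[i]`. -/
def IsNormalPath {V : Type*} (G : SimpleGraph V) (r : V → ℝ) (p : List V) : Prop :=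
  p.Chain' G.Adj ∧ p.Nodup ∧
  (∀ (h : p ≠ []), ∀ v ∈ p, r (p.head h) ≤ r v) ∧
  (∀ i j : ℕ, ∀ (hi : i + 1 < p.length) (hj : j < p.length), i + 1 ≤ j →
    G.Adj (p[i]'(by omega)) (p[j]'hj) → r (p[i+1]'hi) ≤ r (p[j]'hj))

/-- `u` occurs strictly before `w` on the list `p`. -/
def Before {V : Type*} (p : List V) (u w : V) : Prop :=
  ∃ q1 q2 q3 : List V, p = q1 ++ u :: q2 ++ w :: q3

/-!
Fix a vertex `v` of the normal path. No two consecutive vertices `a`, `b` preceding `v` are both to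
the right of `v`, by induction along the path: it holds at the start because the first vertex is
leftmost, and if `a` is not to the right of `v` but its successor `b` is, then the edge `ab` forces
`v` to be adjacent to `b`; so `v` was available as successor of `b`, and the actual successor of `b`
is not to the right of `v`.
-/

/-- Interval orderings: whenever `a ≤ b < c` and `a` is adjacent to `c`, so is `b`. This is the
property of right-endpoint orderings of interval graphs on which the argument rests. The ordering is
given by a key `r`, and vertices with equal keys are allowed. -/
def IsIntervalOrdering {V α : Type*} [Preorder α] (G : SimpleGraph V) (r : V → α) : Prop :=
  ∀ ⦃a b c : V⦄, r a ≤ r b → r b < r c → G.Adj a c → G.Adj b c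

theorem IsIntervalOrdering.of_adj_iff {V α : Type*} [Preorder α] {G : SimpleGraph V} {l r : V → α}
    (hlr : ∀ v, l v ≤ r v) (hadj : ∀ u v, G.Adj u v ↔ u ≠ v ∧ l u ≤ r v ∧ l v ≤ r u) :
    IsIntervalOrdering G r := by
  intro a b c hab hbc hac
  have hca : l c ≤ r a := ((hadj a c).mp hac).2.2
  exact (hadj b c).mpr ⟨ne_of_apply_ne r hbc.ne, (hlr b).trans hbc.le, hca.trans hab⟩

namespace IsNormalPath

variable {V : Type*} {G : SimpleGraph V} {r : V → ℝ}

theorem getElem_zero_le {p : List V} (hp : IsNormalPath G r p) {j : ℕ} (hj : j < p.length) :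
    r p[0] ≤ r p[j] := by
  obtain ⟨-, -, hhead, -⟩ := hp
  have hne : p ≠ [] := List.ne_nil_of_length_pos (by omega)
  simpa only [List.head_eq_getElem] using hhead hne p[j] (List.getElem_mem hj)

theorem getElem_le_or_getElem_succ_le {p : List V} (hp : IsNormalPath G r p)
    (hr : IsIntervalOrdering G r) {j : ℕ} (hj : j < p.length) {m : ℕ} (hm : m + 1 < j) :
    r p[m] ≤ r p[j] ∨ r p[m + 1] ≤ r p[j] := by
  induction m with
  | zero => exact .inl (hp.getElem_zero_le hj)
  | succ m ih =>
    refine or_iff_not_imp_left.mpr fun hlt => ?_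
    have hle : r p[m] ≤ r p[j] := (ih (by omega)).resolve_right hlt
    obtain ⟨hchain, -, -, hnext⟩ := hp
    have hedge : G.Adj p[m] p[m + 1] := List.isChain_iff_getElem.mp hchain m (by omega)
    have hadj : G.Adj p[m + 1] p[j] := (hr hle (not_le.mp hlt) hedge).symm
    exact hnext (m + 1) j (by omega) hj hm.le hadj

theorem le_or_le_of_append {p₁ p₂ : List V} {u u' v : V}
    (hp : IsNormalPath G r (p₁ ++ u :: u' :: p₂)) (hr : IsIntervalOrdering G r) (hv : v ∈ p₂) :
    r u ≤ r v ∨ r u' ≤ r v := by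
  obtain ⟨k, hk, rfl⟩ := List.getElem_of_mem hv
  have hj : p₁.length + (k + 2) < (p₁ ++ u :: u' :: p₂).length := by
    simp only [List.length_append, List.length_cons]
    omega
  simpa [List.getElem_append_right] using
    hp.getElem_le_or_getElem_succ_le hr hj (m := p₁.length) (by omega)

end IsNormalPath

theorem stmt5_general {V : Type*} {G : SimpleGraph V} {r : V → ℝ} (hinj : Function.Injective r)
    (hr : IsIntervalOrdering G r) {p₁ p₂ : List V} {u u' : V}
    (hp : IsNormalPath G r (p₁ ++ u :: u' :: p₂)) :
    ∀ v ∈ p₂, r u < r v ∨ r u' < r v := by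
  intro v hv
  have hnodup : (u :: u' :: p₂).Nodup := hp.2.1.of_append_right
  have hu : u ≠ v := by
    rintro rfl
    exact hnodup.notMem (List.mem_cons_of_mem u' hv)
  have hu' : u' ≠ v := by
    rintro rfl
    exact hnodup.of_cons.notMem hv
  exact (hp.le_or_le_of_append hr hv).imp
    (fun h => h.lt_of_ne (hinj.ne hu)) (fun h => h.lt_of_ne (hinj.ne hu'))

theorem stmt5 {V : Type*} [Fintype V]
    (G : SimpleGraph V) (l r : V → ℝ)
    (hlr : ∀ v : V, l v < r v)
    (hinjl : Function.Injective l) (hinjr : Function.Injective r)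
    (hlrne : ∀ u v : V, l u ≠ r v)
    (hadj : ∀ u v : V, G.Adj u v ↔ u ≠ v ∧ l u ≤ r v ∧ l v ≤ r u)
    (p1 p2 : List V) (u u' : V)
    (hnp : IsNormalPath G r (p1 ++ u :: u' :: p2)) :
    ∀ v ∈ p2, r u < r v ∨ r u' < r v :=
  stmt5_general hinjr (.of_adj_iff (fun v => (hlr v).le) hadj) hnp
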